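/- arXiv:1601.04268 — 2 statements merged into one kernel-verified Lean document; each statement's English description precedes it below -/
import Mathlib

section
/- Let Z, Z₁, W, W₁ ∈ Ĥ₂. There exists a symplectic transformation M ∈ Ω̂₂ with M<Z> = W and M<Z₁> = W₁ if and only if the cross ratios 𝔯(Z,Z₁) and 𝔯(W,W₁) have the same eigenvalues (equivalently, the same characteristic polynomial). -/
open Matrix Complex

noncomputable section

abbrev Mat2 : Type := Matrix (Fin 2) (Fin 2) ℂ
abbrev Mat2R : Type := Matrix (Fin 2) (Fin 2) ℝ
abbrev Mat4 : Type := Matrix (Fin 2 ⊕ Fin 2) (Fin 2 ⊕ Fin 2) ℝ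

/-- `q = [[0,1],[1,0]]`. -/
def qR : Mat2R := !![0, 1; 1, 0]

/-- `J = [[0, I₂],[−I₂, 0]]` (4×4). -/
def Jmat : Mat4 := Matrix.fromBlocks 0 1 (-1) 0

/-- `Q = diag(q, q)` (4×4). -/
def Qmat : Mat4 := Matrix.fromBlocks qR 0 0 qR

/-- `Ω₂ = Sp(4,ℝ) = {M : ᵗM J M = J}`. -/
def Omega2 : Set Mat4 := {M | Mᵀ * Jmat * M = Jmat}

/-- The new Siegel upper half space `Ĥ₂`: bi-symmetric `Z = [[τ,z],[z,τ]]` with `Im τ > |Im z|`. -/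
def Hhat : Set Mat2 :=
  {Z | Z 1 1 = Z 0 0 ∧ Z 1 0 = Z 0 1 ∧ |(Z 0 1).im| < (Z 0 0).im}

/-- The action `M<Z> = (AZ+B)(CZ+D)⁻¹` of a real 4×4 matrix in 2×2 blocks on `Z ∈ ℂ^{2×2}`. -/
def act (M : Mat4) (Z : Mat2) : Mat2 :=
  (M.toBlocks₁₁.map Complex.ofReal * Z + M.toBlocks₁₂.map Complex.ofReal) *
    (M.toBlocks₂₁.map Complex.ofReal * Z + M.toBlocks₂₂.map Complex.ofReal)⁻¹

/-- `Ω̂₂ = {M ∈ Ω₂ : M<Z> ∈ Ĥ₂ for all Z ∈ Ĥ₂}`. -/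
def OmegaHat : Set Mat4 := {M | M ∈ Omega2 ∧ ∀ Z ∈ Hhat, act M Z ∈ Hhat}

/-- Entrywise complex conjugation of a matrix. -/
def conjM (Z : Mat2) : Mat2 := Z.map (starRingEnd ℂ)

/-- The cross ratio `𝔯(Z,Z₁) = (Z−Z₁)(Z−conj Z₁)⁻¹(conj Z−conj Z₁)(conj Z−Z₁)⁻¹`. -/
def crossRatio (Z Z₁ : Mat2) : Mat2 :=
  (Z - Z₁) * (Z - conjM Z₁)⁻¹ * (conjM Z - conjM Z₁) * (conjM Z - Z₁)⁻¹

/-- The bi-symmetric matrix with eigenvalues `a`, `b`. -/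
def mm (a b : ℂ) : Mat2 := !![(a + b) / 2, (a - b) / 2; (a - b) / 2, (a + b) / 2]

lemma mm_mul (a b c d : ℂ) : mm a b * mm c d = mm (a * c) (b * d) := by
  ext i j; fin_cases i <;> fin_cases j <;> simp [mm, Matrix.mul_apply, Fin.sum_univ_two] <;> ring

lemma mm_add (a b c d : ℂ) : mm a b + mm c d = mm (a + c) (b + d) := by
  ext i j; fin_cases i <;> fin_cases j <;> simp [mm] <;> ring

lemma mm_sub (a b c d : ℂ) : mm a b - mm c d = mm (a - c) (b - d) := by
  ext i j; fin_cases i <;> fin_cases j <;> simp [mm] <;> ring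

lemma mm_one : mm 1 1 = 1 := by
  ext i j; fin_cases i <;> fin_cases j <;> simp [mm]

lemma mm_inv (a b : ℂ) (ha : a ≠ 0) (hb : b ≠ 0) : (mm a b)⁻¹ = mm a⁻¹ b⁻¹ := by
  apply Matrix.inv_eq_right_inv
  rw [mm_mul, mul_inv_cancel₀ ha, mul_inv_cancel₀ hb, mm_one]

lemma mm_conj (a b : ℂ) : conjM (mm a b) = mm (starRingEnd ℂ a) (starRingEnd ℂ b) := by
  ext i j; fin_cases i <;> fin_cases j <;> simp [mm, conjM, Complex.conj_ofNat]

lemma mm_mem (a b : ℂ) : mm a b ∈ Hhat ↔ 0 < a.im ∧ 0 < b.im := by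
  simp only [Hhat, Set.mem_setOf_eq, mm]
  simp [abs_lt]
  constructor
  · rintro ⟨h, h'⟩; constructor <;> linarith
  · rintro ⟨h, h'⟩; constructor <;> linarith

lemma exists_mm (Z : Mat2) (hZ : Z ∈ Hhat) : ∃ a b : ℂ, Z = mm a b ∧ 0 < a.im ∧ 0 < b.im := by
  have h : Z = mm (Z 0 0 + Z 0 1) (Z 0 0 - Z 0 1) := by
    obtain ⟨h1, h2, -⟩ := hZ
    ext i j; fin_cases i <;> fin_cases j <;> simp [mm, h1, h2]
  refine ⟨_, _, h, ?_⟩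
  rw [h] at hZ
  exact (mm_mem _ _).1 hZ

/-- scalar cross ratio -/
def cr (a b : ℂ) : ℂ :=
  (a - b) * (a - starRingEnd ℂ b)⁻¹ * (starRingEnd ℂ a - starRingEnd ℂ b) * (starRingEnd ℂ a - b)⁻¹

lemma ne1 {a b : ℂ} (ha : 0 < a.im) (hb : 0 < b.im) : a - starRingEnd ℂ b ≠ 0 := by
  intro h
  have := congrArg Complex.im h
  simp at this; linarith

lemma ne2 {a b : ℂ} (ha : 0 < a.im) (hb : 0 < b.im) : starRingEnd ℂ a - b ≠ 0 := by
  intro h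
  have := congrArg Complex.im h
  simp at this; linarith

lemma crossRatio_mm {a b c d : ℂ} (ha : 0 < a.im) (hb : 0 < b.im) (hc : 0 < c.im) (hd : 0 < d.im) :
    crossRatio (mm a b) (mm c d) = mm (cr a c) (cr b d) := by
  simp only [crossRatio, mm_conj, mm_sub]
  rw [mm_inv _ _ (ne1 ha hc) (ne1 hb hd), mm_inv _ _ (ne2 ha hc) (ne2 hb hd)]
  simp only [mm_mul, cr]

lemma charpoly_mm (a b : ℂ) :
    (mm a b).charpoly = (Polynomial.X - Polynomial.C a) * (Polynomial.X - Polynomial.C b) := by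
  have h1 : (mm a b).trace = a + b := by simp [mm, Matrix.trace_fin_two]
  have h2 : (mm a b).det = a * b := by simp [mm, Matrix.det_fin_two]; ring
  rw [Matrix.charpoly_fin_two, h1, h2]
  simp only [Polynomial.C_add, Polynomial.C_mul]; ring

lemma roots_cases {a b c d : ℂ} (h : (mm a b).charpoly = (mm c d).charpoly) :
    (a = c ∧ b = d) ∨ (a = d ∧ b = c) := by
  rw [charpoly_mm, charpoly_mm] at h
  have e0 := congrArg (Polynomial.eval 0) h
  have e1 := congrArg (Polynomial.eval 1) h
  have e2 := congrArg (Polynomial.eval a) h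
  simp at e0 e1 e2
  have hs : a + b = c + d := by linear_combination e0 - e1
  rcases e2 with e2 | e2
  · left
    have : a = c := by linear_combination e2
    exact ⟨this, by linear_combination hs - this⟩
  · right
    have : a = d := by linear_combination e2
    exact ⟨this, by linear_combination hs - this⟩

/-- equivalence of pairs under `SL₂(ℝ)` -/
def EE (z z₁ w w₁ : ℂ) : Prop := ∃ α β γ δ : ℝ, α * δ - β * γ = 1 ∧
  (α * z + β : ℂ) = w * (γ * z + δ) ∧ (α * z₁ + β : ℂ) = w₁ * (γ * z₁ + δ)

lemma EE_symm {z z₁ w w₁ : ℂ} (h : EE z z₁ w w₁) : EE w w₁ z z₁ := by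
  obtain ⟨α, β, γ, δ, h, h1, h2⟩ := h
  refine ⟨δ, -β, -γ, α, by linarith, ?_, ?_⟩
  · push_cast; linear_combination -h1
  · push_cast; linear_combination -h2

lemma den_ne {z : ℂ} (hz : 0 < z.im) {α β γ δ : ℝ} (h : α * δ - β * γ = 1) :
    (γ * z + δ : ℂ) ≠ 0 := by
  intro h0
  have hi := congrArg Complex.im h0
  have hr := congrArg Complex.re h0
  simp at hi hr
  rcases hi with hi | hi
  · subst hi
    simp at hr
    subst hr
    simp at h
  · exact hz.ne' hi

lemma EE_trans {z z₁ w w₁ v v₁ : ℂ} (h : EE z z₁ w w₁) (h' : EE w w₁ v v₁) :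
    EE z z₁ v v₁ := by
  obtain ⟨α, β, γ, δ, h, h1, h2⟩ := h
  obtain ⟨α', β', γ', δ', h', h1', h2'⟩ := h'
  refine ⟨α' * α + β' * γ, α' * β + β' * δ, γ' * α + δ' * γ, γ' * β + δ' * δ, ?_, ?_, ?_⟩
  · linear_combination h + (α * δ - β * γ) * h'
  · push_cast
    linear_combination (α' - v * γ') * h1 + (γ * z + δ) * h1'
  · push_cast
    linear_combination (α' - v₁ * γ') * h2 + (γ * z₁ + δ) * h2'

lemma EE_affine (z z₁ : ℂ) (hz : 0 < z.im) : EE z z₁ I ((z₁ - z.re) / z.im) := by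
  have hy : Real.sqrt z.im ≠ 0 := (Real.sqrt_pos.2 hz).ne'
  have hyc : (Real.sqrt z.im : ℂ) ≠ 0 := by exact_mod_cast hy
  have hy2 : (z.im : ℂ) = (Real.sqrt z.im : ℂ) ^ 2 := by
    rw [← Complex.ofReal_pow, Real.sq_sqrt hz.le]
  refine ⟨1 / Real.sqrt z.im, - z.re / Real.sqrt z.im, 0, Real.sqrt z.im, ?_, ?_, ?_⟩
  · field_simp; ring
  · have hzz : z = z.re + z.im * I := (Complex.re_add_im z).symm
    push_cast
    field_simp
    linear_combination hzz + I * hy2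
  · push_cast
    rw [hy2]
    field_simp
    ring

lemma cr_affine (z z₁ : ℂ) (hz : 0 < z.im) : cr I ((z₁ - z.re) / z.im) = cr z z₁ := by
  have hy : (z.im : ℂ) ≠ 0 := by exact_mod_cast hz.ne'
  have hzz : z = z.re + z.im * I := (Complex.re_add_im z).symm
  have hzc : starRingEnd ℂ z = z.re - z.im * I := by
    apply Complex.ext <;> simp
  have e1 : I - (z₁ - z.re) / z.im = (z - z₁) / z.im := by
    field_simp; linear_combination -hzz
  have e2 : I - starRingEnd ℂ ((z₁ - z.re) / z.im) = (z - starRingEnd ℂ z₁) / z.im := by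
    simp; field_simp; linear_combination -hzz
  have e3 : starRingEnd ℂ I - starRingEnd ℂ ((z₁ - z.re) / z.im)
      = (starRingEnd ℂ z - starRingEnd ℂ z₁) / z.im := by
    simp; field_simp; linear_combination -hzc
  have e4 : starRingEnd ℂ I - (z₁ - z.re) / z.im = (starRingEnd ℂ z - z₁) / z.im := by
    simp; field_simp; linear_combination -hzc
  simp only [cr]
  rw [e1, e2, e3, e4]
  simp only [inv_div, div_eq_mul_inv, mul_inv, inv_inv]
  field_simp

lemma EE_rot {p q : ℂ} (hp : 0 < p.im) (hq : 0 < q.im) (h : cr I p = cr I q) :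
    EE I p I q := by
  have hI : 0 < I.im := by simp
  have key : q.im * (1 + p.re ^ 2 + p.im ^ 2) = p.im * (1 + q.re ^ 2 + q.im ^ 2) := by
    have n1 := ne1 hI hp
    have n2 := ne2 hI hp
    have n3 := ne1 hI hq
    have n4 := ne2 hI hq
    simp only [cr] at h
    field_simp at h
    have := congrArg Complex.re h
    simp at this
    ring_nf at this
    nlinarith [this]
  by_cases h0 : 1 + q * p = 0
  · by_cases hqp : q = p
    · exact ⟨1, 0, 0, 1, by norm_num, by simp, by simp [hqp]⟩
    · refine ⟨0, 1, -1, 0, by norm_num, by simp, ?_⟩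
      push_cast; linear_combination h0
  · set t : ℂ := (q - p) / (1 + q * p) with ht
    have htm : t * (1 + q * p) = q - p := by rw [ht]; field_simp
    have htr : t.im = 0 := by
      rw [ht, Complex.div_im, ← sub_div]
      apply div_eq_zero_iff.2; left
      simp
      linear_combination key
    have htt : t = (t.re : ℂ) := by apply Complex.ext <;> simp [htr]
    set r := t.re
    have hpos : 0 < 1 + r ^ 2 := by positivity
    set k := Real.sqrt (1 + r ^ 2) with hk
    have hk0 : k ≠ 0 := (Real.sqrt_pos.2 hpos).ne'
    have hkc : (k : ℂ) ≠ 0 := by exact_mod_cast hk0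
    have hk2 : k ^ 2 = 1 + r ^ 2 := Real.sq_sqrt hpos.le
    refine ⟨1 / k, r / k, -(r / k), 1 / k, ?_, ?_, ?_⟩
    · field_simp; linear_combination -hk2
    · push_cast
      field_simp
      linear_combination -(r : ℂ) * Complex.I_sq * (-1)
    · push_cast
      field_simp
      rw [htt] at htm
      linear_combination htm

lemma EE_of_cr {z z₁ w w₁ : ℂ} (hz : 0 < z.im) (hz₁ : 0 < z₁.im) (hw : 0 < w.im)
    (hw₁ : 0 < w₁.im) (h : cr z z₁ = cr w w₁) : EE z z₁ w w₁ := by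
  have him : ∀ u v : ℂ, 0 < u.im → 0 < v.im → 0 < ((v - u.re) / u.im : ℂ).im := by
    intro u v hu hv
    rw [Complex.div_ofReal_im]
    simp
    positivity
  refine EE_trans (EE_affine z z₁ hz) (EE_trans ?_ (EE_symm (EE_affine w w₁ hw)))
  apply EE_rot (him _ _ hz hz₁) (him _ _ hw hw₁)
  rw [cr_affine _ _ hz, cr_affine _ _ hw, h]

/-- real bi-symmetric matrix, multiplied by `diag(1,e)` -/
def mr (e a b : ℝ) : Mat2R :=
  !![(a + b) / 2, (a - b) / 2; e * ((a - b) / 2), e * ((a + b) / 2)]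

/-- `diag(1,e)` -/
def sg (e : ℝ) : Mat2 := !![1, 0; 0, (e : ℂ)]

lemma mr_map (e a b : ℝ) : (mr e a b).map Complex.ofReal = sg e * mm a b := by
  ext i j; fin_cases i <;> fin_cases j <;>
    simp [mr, sg, mm, Matrix.mul_apply, Fin.sum_univ_two]

lemma sg_inv {e : ℝ} (he : e * e = 1) : (sg e)⁻¹ = sg e := by
  apply Matrix.inv_eq_right_inv
  have : (e : ℂ) * e = 1 := by exact_mod_cast he
  ext i j; fin_cases i <;> fin_cases j <;>
    simp [sg, Matrix.mul_apply, Fin.sum_univ_two, this]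

/-- the symplectic matrix attached to two elements of `SL₂(ℝ)` -/
def MM (e α β γ δ α' β' γ' δ' : ℝ) : Mat4 :=
  Matrix.fromBlocks (mr e α α') (mr e β β') (mr e γ γ') (mr e δ δ')

lemma mr_tm {e : ℝ} (he : e * e = 1) (a b c d : ℝ) :
    (mr e a b)ᵀ * mr e c d = mr 1 (a * c) (b * d) := by
  ext i j; fin_cases i <;> fin_cases j <;>
    simp [mr, Matrix.mul_apply, Fin.sum_univ_two]
  · linear_combination (a - b) / 2 * ((c - d) / 2) * he
  · linear_combination (a - b) / 2 * ((c + d) / 2) * he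
  · linear_combination (a + b) / 2 * ((c - d) / 2) * he
  · linear_combination (a + b) / 2 * ((c + d) / 2) * he

lemma mr_eq (a b c d : ℝ) : mr 1 a b - mr 1 c d = mr 1 (a - c) (b - d) := by
  ext i j; fin_cases i <;> fin_cases j <;> simp [mr] <;> ring

lemma mr_zero : mr 1 0 0 = 0 := by
  ext i j; fin_cases i <;> fin_cases j <;> simp [mr]

lemma mr_one : mr 1 1 1 = 1 := by
  ext i j; fin_cases i <;> fin_cases j <;> simp [mr]

lemma mr_neg_one : mr 1 (-1) (-1) = -1 := by
  ext i j; fin_cases i <;> fin_cases j <;> simp [mr]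

lemma MM_sympl {e α β γ δ α' β' γ' δ' : ℝ} (he : e * e = 1) (h : α * δ - β * γ = 1)
    (h' : α' * δ' - β' * γ' = 1) : MM e α β γ δ α' β' γ' δ' ∈ Omega2 := by
  simp only [Omega2, Set.mem_setOf_eq, MM, Jmat, Matrix.fromBlocks_transpose,
    Matrix.fromBlocks_multiply]
  simp only [mul_zero, mul_one, mul_neg, zero_add, add_zero, neg_mul]
  congr 1
  · rw [neg_add_eq_sub, mr_tm he, mr_tm he, mr_eq, ← mr_zero]; congr 1 <;> ring
  · rw [neg_add_eq_sub, mr_tm he, mr_tm he, mr_eq, ← mr_one]; congr 1 <;> linarith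
  · rw [neg_add_eq_sub, mr_tm he, mr_tm he, mr_eq, ← mr_neg_one]; congr 1 <;> linarith
  · rw [neg_add_eq_sub, mr_tm he, mr_tm he, mr_eq, ← mr_zero]; congr 1 <;> ring

lemma MM_act {e α β γ δ α' β' γ' δ' : ℝ} (he : e * e = 1) (h : α * δ - β * γ = 1)
    (h' : α' * δ' - β' * γ' = 1) {a b : ℂ} (ha : 0 < a.im) (hb : 0 < b.im) :
    act (MM e α β γ δ α' β' γ' δ') (mm a b) =
      sg e * mm ((α * a + β) / (γ * a + δ)) ((α' * b + β') / (γ' * b + δ')) * sg e := by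
  simp only [act, MM, Matrix.toBlocks_fromBlocks₁₁, Matrix.toBlocks_fromBlocks₁₂,
    Matrix.toBlocks_fromBlocks₂₁, Matrix.toBlocks_fromBlocks₂₂, mr_map]
  rw [mul_assoc, mul_assoc, ← mul_add, ← mul_add, mm_mul, mm_mul, mm_add, mm_add,
    Matrix.mul_inv_rev, sg_inv he, mm_inv _ _ (den_ne ha h) (den_ne hb h'), mul_assoc,
    ← mul_assoc (mm _ _), mm_mul, ← mul_assoc]
  simp only [div_eq_mul_inv]

lemma sg_one (a b : ℂ) : sg 1 * mm a b * sg 1 = mm a b := by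
  have : sg 1 = 1 := by ext i j; fin_cases i <;> fin_cases j <;> simp [sg]
  simp [this]

lemma sg_neg (a b : ℂ) : sg (-1) * mm a b * sg (-1) = mm b a := by
  ext i j; fin_cases i <;> fin_cases j <;>
    simp [sg, mm, Matrix.mul_apply, Fin.sum_univ_two] <;> ring

lemma im_pos {α β γ δ : ℝ} (h : α * δ - β * γ = 1) {a : ℂ} (ha : 0 < a.im) :
    0 < ((α * a + β : ℂ) / (γ * a + δ)).im := by
  have hn : 0 < Complex.normSq (γ * a + δ) := Complex.normSq_pos.2 (den_ne ha h)
  rw [Complex.div_im, ← sub_div]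
  apply div_pos _ hn
  simp
  have : α * a.im * (γ * a.re + δ) - (α * a.re + β) * (γ * a.im) = a.im := by
    linear_combination a.im * h
  linarith

lemma MM_hat {e α β γ δ α' β' γ' δ' : ℝ} (he : e = 1 ∨ e = -1) (h : α * δ - β * γ = 1)
    (h' : α' * δ' - β' * γ' = 1) : MM e α β γ δ α' β' γ' δ' ∈ OmegaHat := by
  have hee : e * e = 1 := by rcases he with rfl | rfl <;> norm_num
  refine ⟨MM_sympl hee h h', ?_⟩
  intro Z hZ
  obtain ⟨a, b, rfl, ha, hb⟩ := exists_mm Z hZ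
  rw [MM_act hee h h' ha hb]
  rcases he with rfl | rfl
  · rw [sg_one, mm_mem]; exact ⟨im_pos h ha, im_pos h' hb⟩
  · rw [sg_neg, mm_mem]; exact ⟨im_pos h' hb, im_pos h ha⟩

/-! ### Invariance of the cross ratio -/

lemma Hhat_symm {Z : Mat2} (hZ : Z ∈ Hhat) : Zᵀ = Z := by
  obtain ⟨a, b, rfl, -, -⟩ := exists_mm Z hZ
  ext i j; fin_cases i <;> fin_cases j <;> simp [mm]

lemma conjM_symm {Z : Mat2} (hZ : Zᵀ = Z) : (conjM Z)ᵀ = conjM Z := by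
  rw [conjM, ← Matrix.transpose_map, hZ]

lemma conjM_mul (X Y : Mat2) : conjM (X * Y) = conjM X * conjM Y := by
  simp [conjM, Matrix.map_mul]

lemma conjM_add (X Y : Mat2) : conjM (X + Y) = conjM X + conjM Y := by
  ext; simp [conjM]

lemma conjM_real (X : Mat2R) : conjM (X.map Complex.ofReal) = X.map Complex.ofReal := by
  ext; simp [conjM]

lemma conjM_one : conjM 1 = 1 := by
  ext i j; fin_cases i <;> fin_cases j <;> simp [conjM]

/-- `C Z + D` -/
def PP (M : Mat4) (Z : Mat2) : Mat2 :=
  M.toBlocks₂₁.map Complex.ofReal * Z + M.toBlocks₂₂.map Complex.ofReal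

/-- `A Z + B` -/
def NN (M : Mat4) (Z : Mat2) : Mat2 :=
  M.toBlocks₁₁.map Complex.ofReal * Z + M.toBlocks₁₂.map Complex.ofReal

lemma act_eq (M : Mat4) (Z : Mat2) : act M Z = NN M Z * (PP M Z)⁻¹ := rfl

lemma PP_conj (M : Mat4) (Z : Mat2) : PP M (conjM Z) = conjM (PP M Z) := by
  simp [PP, conjM_add, conjM_mul, conjM_real]

lemma NN_conj (M : Mat4) (Z : Mat2) : NN M (conjM Z) = conjM (NN M Z) := by
  simp [NN, conjM_add, conjM_mul, conjM_real]

lemma isUnit_conj {X : Mat2} (h : IsUnit X.det) : IsUnit (conjM X).det := by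
  apply Matrix.isUnit_det_of_right_inverse (B := conjM X⁻¹)
  rw [← conjM_mul, Matrix.mul_nonsing_inv _ h, conjM_one]

lemma act_conj (M : Mat4) (Z : Mat2) (h : IsUnit (PP M Z).det) :
    act M (conjM Z) = conjM (act M Z) := by
  rw [act_eq, act_eq, PP_conj, NN_conj, conjM_mul]
  congr 1
  apply Matrix.inv_eq_right_inv
  rw [← conjM_mul, Matrix.mul_nonsing_inv _ h, conjM_one]

lemma PP_unit {M : Mat4} {Z : Mat2} (h : act M Z ∈ Hhat) : IsUnit (PP M Z).det := by
  by_contra h0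
  rw [act_eq, Matrix.nonsing_inv_apply_not_isUnit _ h0, mul_zero] at h
  simp [Hhat] at h

lemma sympl_blocks {M : Mat4} (hM : M ∈ Omega2) :
    M.toBlocks₁₁ᵀ * M.toBlocks₂₁ = M.toBlocks₂₁ᵀ * M.toBlocks₁₁ ∧
    M.toBlocks₁₁ᵀ * M.toBlocks₂₂ - M.toBlocks₂₁ᵀ * M.toBlocks₁₂ = 1 ∧
    M.toBlocks₂₂ᵀ * M.toBlocks₁₁ - M.toBlocks₁₂ᵀ * M.toBlocks₂₁ = 1 ∧
    M.toBlocks₁₂ᵀ * M.toBlocks₂₂ = M.toBlocks₂₂ᵀ * M.toBlocks₁₂ := by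
  rw [Omega2, Set.mem_setOf_eq, ← Matrix.fromBlocks_toBlocks M] at hM
  simp only [Jmat, Matrix.fromBlocks_transpose, Matrix.fromBlocks_multiply] at hM
  simp only [mul_zero, mul_one, mul_neg, zero_add, add_zero, neg_mul, neg_add_eq_sub] at hM
  obtain ⟨h1, h2, h3, h4⟩ := Matrix.fromBlocks_inj.1 hM
  refine ⟨sub_eq_zero.1 h1, h2, ?_, sub_eq_zero.1 h4⟩
  rw [← neg_sub, h3, neg_neg]

lemma PN {M : Mat4} (hM : M ∈ Omega2) (X Y : Mat2) (hY : Yᵀ = Y) :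
    (PP M Y)ᵀ * NN M X - (NN M Y)ᵀ * PP M X = X - Y := by
  obtain ⟨h1, h2, h3, h4⟩ := sympl_blocks hM
  have tr : ∀ A B : Mat2R, (A.map Complex.ofReal)ᵀ * B.map Complex.ofReal
      = (Aᵀ * B).map Complex.ofReal := by
    intro A B
    ext i j
    simp [Matrix.mul_apply]
  have ts : ∀ A B : Mat2R, A - B = 1 →
      A.map Complex.ofReal - B.map Complex.ofReal = (1 : Mat2) := by
    intro A B h
    have : A = B + 1 := by rw [← h]; abel
    subst this
    ext i j
    fin_cases i <;> fin_cases j <;> simp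
  have k1 := congrArg (fun A : Mat2R => A.map Complex.ofReal) h1
  have k4 := congrArg (fun A : Mat2R => A.map Complex.ofReal) h4
  have k2 := ts _ _ h2
  have k3 := ts _ _ h3
  simp only [← tr] at k1 k2 k3 k4
  simp only [PP, NN, Matrix.transpose_add, Matrix.transpose_mul, hY]
  generalize M.toBlocks₁₁.map Complex.ofReal = A at *
  generalize M.toBlocks₁₂.map Complex.ofReal = B at *
  generalize M.toBlocks₂₁.map Complex.ofReal = C at *
  generalize M.toBlocks₂₂.map Complex.ofReal = D at *
  have e : (Y * Cᵀ + Dᵀ) * (A * X + B) - (Y * Aᵀ + Bᵀ) * (C * X + D)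
      = Y * (Cᵀ * A - Aᵀ * C) * X - Y * (Aᵀ * D - Cᵀ * B) + (Dᵀ * A - Bᵀ * C) * X
        + (Dᵀ * B - Bᵀ * D) := by noncomm_ring
  rw [e, k1, k2, k3, k4]
  simp
  abel

lemma act_sub {M : Mat4} (hM : M ∈ Omega2) (X Y : Mat2) (hY : Yᵀ = Y)
    (hY' : (act M Y)ᵀ = act M Y) (hX : IsUnit (PP M X).det) (hP : IsUnit (PP M Y).det) :
    act M X - act M Y = ((PP M Y)ᵀ)⁻¹ * (X - Y) * (PP M X)⁻¹ := by
  have hPt : IsUnit ((PP M Y)ᵀ).det := by rwa [Matrix.det_transpose]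
  rw [← PN hM X Y hY, ← hY', act_eq, act_eq, Matrix.transpose_mul, Matrix.transpose_nonsing_inv,
    mul_sub, sub_mul, ← mul_assoc, Matrix.nonsing_inv_mul _ hPt, one_mul, mul_assoc (_⁻¹),
    mul_assoc (_ᵀ) (PP M X), Matrix.mul_nonsing_inv _ hX, mul_one]

lemma crossRatio_act {M : Mat4} (hM : M ∈ Omega2) {Z Z₁ : Mat2} (hZ : Z ∈ Hhat) (hZ₁ : Z₁ ∈ Hhat)
    (hW : act M Z ∈ Hhat) (hW₁ : act M Z₁ ∈ Hhat) :
    (crossRatio (act M Z) (act M Z₁)).charpoly = (crossRatio Z Z₁).charpoly := by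
  have u := PP_unit hW
  have u₁ := PP_unit hW₁
  have uc : IsUnit (PP M (conjM Z)).det := by rw [PP_conj]; exact isUnit_conj u
  have uc₁ : IsUnit (PP M (conjM Z₁)).det := by rw [PP_conj]; exact isUnit_conj u₁
  have s₁ := Hhat_symm hZ₁
  have t₁ := Hhat_symm hW₁
  have sc₁ := conjM_symm s₁
  have tc₁ : (act M (conjM Z₁))ᵀ = act M (conjM Z₁) := by
    rw [act_conj _ _ u₁]; exact conjM_symm t₁
  simp only [crossRatio]
  rw [← act_conj _ _ u, ← act_conj _ _ u₁]
  rw [act_sub hM _ _ s₁ t₁ u u₁, act_sub hM _ _ sc₁ tc₁ u uc₁, act_sub hM _ _ sc₁ tc₁ uc uc₁,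
    act_sub hM _ _ s₁ t₁ uc u₁]
  have v₁ : IsUnit ((PP M Z₁)ᵀ).det := by rwa [Matrix.det_transpose]
  have vc₁ : IsUnit ((PP M (conjM Z₁))ᵀ).det := by rwa [Matrix.det_transpose]
  simp only [Matrix.mul_inv_rev, Matrix.nonsing_inv_nonsing_inv _ v₁,
    Matrix.nonsing_inv_nonsing_inv _ vc₁, Matrix.nonsing_inv_nonsing_inv _ u,
    Matrix.nonsing_inv_nonsing_inv _ uc]
  simp only [mul_assoc]
  rw [Matrix.nonsing_inv_mul_cancel_left _ _ u, Matrix.mul_nonsing_inv_cancel_left _ _ vc₁,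
    Matrix.nonsing_inv_mul_cancel_left _ _ uc, Matrix.charpoly_mul_comm]
  simp only [mul_assoc]
  rw [Matrix.mul_nonsing_inv _ v₁, mul_one]

/-- a symplectic transformation in `Ω̂₂` taking `(Z, Z₁)` to
`(W, W₁)` exists iff the cross ratios `𝔯(Z,Z₁)` and `𝔯(W,W₁)` have the same
eigenvalues (the same characteristic polynomial). -/
theorem stmt_10 (Z Z₁ W W₁ : Mat2)
    (hZ : Z ∈ Hhat) (hZ₁ : Z₁ ∈ Hhat) (hW : W ∈ Hhat) (hW₁ : W₁ ∈ Hhat) :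
    (∃ M ∈ OmegaHat, act M Z = W ∧ act M Z₁ = W₁) ↔
      (crossRatio Z Z₁).charpoly = (crossRatio W W₁).charpoly := by
  constructor
  · rintro ⟨M, hM, rfl, rfl⟩
    exact (crossRatio_act hM.1 hZ hZ₁ hW hW₁).symm
  · intro h
    obtain ⟨a, b, rfl, ha, hb⟩ := exists_mm Z hZ
    obtain ⟨a₁, b₁, rfl, ha₁, hb₁⟩ := exists_mm Z₁ hZ₁
    obtain ⟨c, d, rfl, hc, hd⟩ := exists_mm W hW
    obtain ⟨c₁, d₁, rfl, hc₁, hd₁⟩ := exists_mm W₁ hW₁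
    rw [crossRatio_mm ha hb ha₁ hb₁, crossRatio_mm hc hd hc₁ hd₁] at h
    rcases roots_cases h with ⟨h1, h2⟩ | ⟨h1, h2⟩
    · obtain ⟨α, β, γ, δ, k, k1, k2⟩ := EE_of_cr ha ha₁ hc hc₁ h1
      obtain ⟨α', β', γ', δ', k', k1', k2'⟩ := EE_of_cr hb hb₁ hd hd₁ h2
      refine ⟨MM 1 α β γ δ α' β' γ' δ', MM_hat (Or.inl rfl) k k', ?_, ?_⟩
      · rw [MM_act (by norm_num) k k' ha hb, sg_one, (div_eq_iff (den_ne ha k)).2 k1,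
          (div_eq_iff (den_ne hb k')).2 k1']
      · rw [MM_act (by norm_num) k k' ha₁ hb₁, sg_one, (div_eq_iff (den_ne ha₁ k)).2 k2,
          (div_eq_iff (den_ne hb₁ k')).2 k2']
    · obtain ⟨α, β, γ, δ, k, k1, k2⟩ := EE_of_cr ha ha₁ hd hd₁ h1
      obtain ⟨α', β', γ', δ', k', k1', k2'⟩ := EE_of_cr hb hb₁ hc hc₁ h2
      refine ⟨MM (-1) α β γ δ α' β' γ' δ', MM_hat (Or.inr rfl) k k', ?_, ?_⟩
      · rw [MM_act (by norm_num) k k' ha hb, sg_neg, (div_eq_iff (den_ne ha k)).2 k1,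
          (div_eq_iff (den_ne hb k')).2 k1']
      · rw [MM_act (by norm_num) k k' ha₁ hb₁, sg_neg, (div_eq_iff (den_ne ha₁ k)).2 k2,
          (div_eq_iff (den_ne hb₁ k')).2 k2']
end
end

section
/- Let M ∈ Ω̂₂ and let F : Ĥ₂ → Ĥ₂ be the induced map in real coordinates: writing Z = [[x₁+iy₁, x₂+iy₂],[x₂+iy₂, x₁+iy₁]] and M<Z> = [[u₁+iv₁, u₂+iv₂],[u₂+iv₂, u₁+iv₁]], F sends (x₁,x₂,y₁,y₂) to (u₁,u₂,v₁,v₂). Then at every point of Ĥ₂ the Jacobian determinant of F equals (v₁+v₂)²(v₁−v₂)²/((y₁+y₂)²(y₁−y₂)²). Consequently the symplectic volume element dv = 4/((y₁+y₂)²(y₁−y₂)²) dx₁ dx₂ dy₁ dy₂ on Ĥ₂ is invariant under the action of every element of Ω̂₂. -/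
open Matrix Complex

noncomputable section

/-- The point of `Ĥ₂` with real coordinates `p = (x₁, x₂, y₁, y₂)`. -/
def ptZ (p : Fin 4 → ℝ) : Mat2 :=
  !![(p 0 : ℂ) + (p 2 : ℂ) * Complex.I, (p 1 : ℂ) + (p 3 : ℂ) * Complex.I;
     (p 1 : ℂ) + (p 3 : ℂ) * Complex.I, (p 0 : ℂ) + (p 2 : ℂ) * Complex.I]

/-- `Ĥ₂` in the real coordinates `(x₁, x₂, y₁, y₂)`: the condition `y₁ > |y₂|`. -/
def Hhat4 : Set (Fin 4 → ℝ) := {p | |p 3| < p 2}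

/-- The map induced by `M` on `Ĥ₂` in the real coordinates `(x₁, x₂, y₁, y₂)`,
sending them to `(u₁, u₂, v₁, v₂)`. -/
def Fmap (M : Mat4) (p : Fin 4 → ℝ) : Fin 4 → ℝ :=
  ![(act M (ptZ p) 0 0).re, (act M (ptZ p) 0 1).re,
    (act M (ptZ p) 0 0).im, (act M (ptZ p) 0 1).im]


lemma symp_blocks (A B C D : Mat2R) (h : Matrix.fromBlocks A B C D ∈ Omega2) :
    Aᵀ * C = Cᵀ * A ∧ Aᵀ * D - Cᵀ * B = 1 ∧ Bᵀ * D = Dᵀ * B ∧ Dᵀ * A - Bᵀ * C = 1 := by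
  simp only [Omega2, Jmat, Set.mem_ofPred_eq, Matrix.fromBlocks_transpose,
    Matrix.fromBlocks_multiply, Matrix.fromBlocks_inj] at h
  obtain ⟨h1, h2, h3, h4⟩ := h
  simp only [Matrix.mul_zero, Matrix.mul_one, Matrix.mul_neg, Matrix.neg_mul, zero_add,
    add_zero] at h1 h2 h3 h4
  refine ⟨?_, ?_, ?_, ?_⟩
  · rw [← sub_eq_zero, ← h1]; abel
  · rw [← h2]; abel
  · rw [← sub_eq_zero, ← h4]; abel
  · rw [← neg_inj, ← h3]; abel

lemma symp_blocksC (M : Mat4) (h : M ∈ Omega2) :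
    ∃ A B C D : Mat2, A = M.toBlocks₁₁.map Complex.ofReal ∧ B = M.toBlocks₁₂.map Complex.ofReal ∧
      C = M.toBlocks₂₁.map Complex.ofReal ∧ D = M.toBlocks₂₂.map Complex.ofReal ∧
    Aᵀ * C = Cᵀ * A ∧ Aᵀ * D - Cᵀ * B = 1 ∧ Bᵀ * D = Dᵀ * B ∧ Dᵀ * A - Bᵀ * C = 1 := by
  refine ⟨_, _, _, _, rfl, rfl, rfl, rfl, ?_⟩
  rw [← Matrix.fromBlocks_toBlocks M] at h
  obtain ⟨h1, h2, h3, h4⟩ := symp_blocks _ _ _ _ h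
  have key : ∀ X : Mat2R, X.map Complex.ofReal = (Complex.ofRealHom.mapMatrix X : Mat2) :=
    fun X => rfl
  have keyT : ∀ X : Mat2R, (X.map Complex.ofReal)ᵀ = (Complex.ofRealHom.mapMatrix Xᵀ : Mat2) :=
    fun X => rfl
  simp only [keyT]
  simp only [key, ← map_mul, ← map_sub, h1, h2, h3, h4, map_one, and_self]

def Vm (M : Mat4) (Z : Mat2) : Mat2 :=
  M.toBlocks₂₁.map Complex.ofReal * Z + M.toBlocks₂₂.map Complex.ofReal

lemma diff_identity (M : Mat4) (h : M ∈ Omega2) (Z Z' : Mat2) (hZ' : Z'ᵀ = Z')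
    (hV : IsUnit (Vm M Z).det) (hV' : IsUnit (Vm M Z').det) :
    (act M Z')ᵀ - act M Z = ((Vm M Z')⁻¹)ᵀ * (Z' - Z) * (Vm M Z)⁻¹ := by
  obtain ⟨A, B, C, D, hA, hB, hC, hD, h1, h2, h3, h4⟩ := symp_blocksC M h
  unfold act
  unfold Vm at *
  rw [← hA, ← hB, ← hC, ← hD]
  rw [← hC, ← hD] at hV hV'
  set V := C * Z + D with hVd
  set V' := C * Z' + D with hVd'
  have e : (A * Z' + B)ᵀ * V - V'ᵀ * (A * Z + B) = Z' - Z := by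
    have e1 : (A * Z' + B)ᵀ * V - V'ᵀ * (A * Z + B)
      = Z' * (Aᵀ * C - Cᵀ * A) * Z + Z' * (Aᵀ * D - Cᵀ * B) - (Dᵀ * A - Bᵀ * C) * Z
        + (Bᵀ * D - Dᵀ * B) := by
      rw [hVd, hVd']
      simp only [Matrix.transpose_add, Matrix.transpose_mul, hZ']
      noncomm_ring
    rw [e1, h1, h2, h3, h4]; simp
  have i1 : V * V⁻¹ = 1 := Matrix.mul_nonsing_inv _ hV
  have i2 : (V'⁻¹)ᵀ * V'ᵀ = 1 := by
    rw [← Matrix.transpose_mul, Matrix.mul_nonsing_inv _ hV', Matrix.transpose_one]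
  rw [← e, Matrix.transpose_mul, Matrix.mul_sub, Matrix.sub_mul]
  congr 1
  · rw [Matrix.mul_assoc, Matrix.mul_assoc, i1, Matrix.mul_one]
  · rw [← Matrix.mul_assoc, i2, Matrix.one_mul]

lemma det_unit (M : Mat4) (hM : M ∈ OmegaHat) (Z : Mat2) (hZ : Z ∈ Hhat) :
    IsUnit (Vm M Z).det := by
  by_contra hc
  have h := hM.2 Z hZ
  have h0 : act M Z = 0 := by
    unfold act
    unfold Vm at hc
    rw [Matrix.nonsing_inv_apply_not_isUnit _ hc, Matrix.mul_zero]
  rw [h0] at h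
  simp [Hhat] at h

lemma ptZ_mem {p : Fin 4 → ℝ} (hp : p ∈ Hhat4) : ptZ p ∈ Hhat := by
  simpa [ptZ, Hhat, Hhat4] using hp

lemma ptZ_symm (p : Fin 4 → ℝ) : (ptZ p)ᵀ = ptZ p := by
  ext i j; fin_cases i <;> fin_cases j <;> simp [ptZ]

lemma hasFDerivAt_cont_mul {E : Type*} [NormedAddCommGroup E] [NormedSpace ℝ E]
    (g : E → ℂ) (l : E →L[ℝ] ℂ) (p : E) (hg : ContinuousAt g p) :
    HasFDerivAt (fun x => l (x - p) * g x) (g p • l) p := by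
  rw [hasFDerivAt_iff_isLittleO]
  have h1 : (fun x => g x - g p) =o[nhds p] (fun _ => (1 : ℝ)) := by
    rw [Asymptotics.isLittleO_one_iff]
    have := hg.sub (continuousAt_const (y := g p))
    rw [ContinuousAt, Pi.sub_apply, sub_self] at this
    exact this
  have h2 : (fun x => l (x - p)) =O[nhds p] (fun x => x - p) := l.isBigO_comp _ _
  have h3 := h1.mul_isBigO h2.norm_right
  refine (Asymptotics.IsLittleO.congr' h3 ?_ (Filter.EventuallyEq.refl _ _)).trans_isBigO ?_
  · filter_upwards with x
    simp; ring
  · simpa using (Asymptotics.isBigO_refl (fun x : E => x - p) (nhds p)).norm_left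

def sL : (Fin 4 → ℝ) →L[ℝ] ℂ :=
  Complex.ofRealCLM.comp (ContinuousLinearMap.proj 0) +
    Complex.I • Complex.ofRealCLM.comp (ContinuousLinearMap.proj 2)

def tL : (Fin 4 → ℝ) →L[ℝ] ℂ :=
  Complex.ofRealCLM.comp (ContinuousLinearMap.proj 1) +
    Complex.I • Complex.ofRealCLM.comp (ContinuousLinearMap.proj 3)

lemma sL_apply (h : Fin 4 → ℝ) : sL h = h 0 + Complex.I * h 2 := by simp [sL]
lemma tL_apply (h : Fin 4 → ℝ) : tL h = h 1 + Complex.I * h 3 := by simp [tL]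

lemma ptZ_sub (p p' : Fin 4 → ℝ) :
    ptZ p' - ptZ p = !![sL (p' - p), tL (p' - p); tL (p' - p), sL (p' - p)] := by
  ext i j; fin_cases i <;> fin_cases j <;> simp [ptZ, sL_apply, tL_apply] <;> ring

lemma Hhat4_open : IsOpen Hhat4 := by
  unfold Hhat4
  exact isOpen_lt (by fun_prop) (by fun_prop)

lemma K_cont (M : Mat4) (p : Fin 4 → ℝ) (h : IsUnit (Vm M (ptZ p)).det) (i j : Fin 2) :
    ContinuousAt (fun x => (Vm M (ptZ x))⁻¹ i j) p := by
  have hV : Continuous (fun x => Vm M (ptZ x)) := by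
    unfold Vm
    have : Continuous ptZ := by
      unfold ptZ
      refine continuous_matrix fun i j => ?_
      fin_cases i <;> fin_cases j <;> simp <;> fun_prop
    fun_prop
  simp only [Matrix.inv_def, Ring.inverse_eq_inv', Matrix.smul_apply, smul_eq_mul]
  refine ContinuousAt.mul (ContinuousAt.inv₀ hV.matrix_det.continuousAt h.ne_zero) ?_
  exact (hV.matrix_adjugate.matrix_elem i j).continuousAt

lemma deriv_entry (M : Mat4) (hM : M ∈ OmegaHat) (p : Fin 4 → ℝ) (hp : p ∈ Hhat4)
    (K : Mat2) (hK : K = (Vm M (ptZ p))⁻¹) (i j : Fin 2) :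
    HasFDerivAt (fun x => act M (ptZ x) i j)
      ((K 0 i * K 0 j + K 1 i * K 1 j) • sL + (K 1 i * K 0 j + K 0 i * K 1 j) • tL) p := by
  have hu := det_unit M hM _ (ptZ_mem hp)
  have c := fun i j => K_cont M p hu i j
  have H1 := hasFDerivAt_cont_mul
    (fun x => (Vm M (ptZ x))⁻¹ 0 i * K 0 j + (Vm M (ptZ x))⁻¹ 1 i * K 1 j) sL p
    (((c 0 i).mul_const _).add ((c 1 i).mul_const _))
  have H2 := hasFDerivAt_cont_mul
    (fun x => (Vm M (ptZ x))⁻¹ 1 i * K 0 j + (Vm M (ptZ x))⁻¹ 0 i * K 1 j) tL p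
    (((c 1 i).mul_const _).add ((c 0 i).mul_const _))
  have H := (H1.add H2).const_add (act M (ptZ p) i j)
  simp only [← hK] at H
  refine H.congr_of_eventuallyEq ?_
  filter_upwards [Hhat4_open.mem_nhds hp] with x hx
  have hux := det_unit M hM _ (ptZ_mem hx)
  have e := diff_identity M hM.1 (ptZ p) (ptZ x) (ptZ_symm x) hu hux
  have hs : (act M (ptZ x))ᵀ = act M (ptZ x) := by
    have := hM.2 _ (ptZ_mem hx)
    ext i j; fin_cases i <;> fin_cases j <;> simp [this.2.1]
  rw [hs, ptZ_sub, ← hK] at e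
  have e' := congrFun (congrFun e i) j
  rw [Matrix.sub_apply, sub_eq_iff_eq_add] at e'
  rw [e']
  simp only [Matrix.mul_apply, Fin.sum_univ_two, Matrix.transpose_apply, Pi.add_apply]
  simp
  ring

lemma alg_K (a b c d : ℂ) (h1 : a * a + c * c = b * b + d * d) (h2 : c * a + a * c = d * b + b * d)
    (h : a * d - b * c ≠ 0) : (a * a - c * c) ^ 2 = (a * d - b * c) ^ 2 := by
  have p1 : (a + c) ^ 2 = (b + d) ^ 2 := by linear_combination h1 + h2
  have p2 : (a - c) ^ 2 = (b - d) ^ 2 := by linear_combination h1 - h2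
  rcases sq_eq_sq_iff_eq_or_eq_neg.mp p1 with q1 | q1 <;>
  rcases sq_eq_sq_iff_eq_or_eq_neg.mp p2 with q2 | q2
  · have : a = b := by linear_combination (q1 + q2) / 2
    have : c = d := by linear_combination (q1 - q2) / 2
    exfalso; apply h; subst_vars; ring
  · have : a = d := by linear_combination (q1 + q2) / 2
    have : c = b := by linear_combination (q1 - q2) / 2
    subst_vars; ring
  · have ha : a = -d := by linear_combination (q1 + q2) / 2
    have hc : c = -b := by linear_combination (q1 - q2) / 2
    rw [ha, hc]; ring
  · have ha : a = -b := by linear_combination (q1 + q2) / 2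
    have hc : c = -d := by linear_combination (q1 - q2) / 2
    exfalso; apply h; rw [ha, hc]; ring

/-- Real form of the complex matrix `[[α, β], [γ, δ]]`. -/
def realM (α β γ δ : ℂ) : Matrix (Fin 4) (Fin 4) ℝ :=
  !![α.re, β.re, -α.im, -β.im;
     γ.re, δ.re, -γ.im, -δ.im;
     α.im, β.im, α.re, β.re;
     γ.im, δ.im, γ.re, δ.re]

lemma det_realM (α β γ δ : ℂ) : (realM α β γ δ).det = Complex.normSq (α * δ - β * γ) := by
  simp [realM, Matrix.det_succ_row_zero, Fin.sum_univ_succ, Complex.normSq_apply, Fin.succAbove]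
  ring

lemma hasFDerivAt_Fmap (M : Mat4) (p : Fin 4 → ℝ) (α β γ δ : ℂ)
    (h0 : HasFDerivAt (fun x => act M (ptZ x) 0 0) (α • sL + β • tL) p)
    (h1 : HasFDerivAt (fun x => act M (ptZ x) 0 1) (γ • sL + δ • tL) p) :
    HasFDerivAt (Fmap M) (LinearMap.toContinuousLinearMap (Matrix.toLin' (realM α β γ δ))) p := by
  rw [hasFDerivAt_pi']
  intro i
  fin_cases i
  · refine (Complex.reCLM.hasFDerivAt.comp p h0).congr_fderiv ?_
    ext h
    simp [sL_apply, tL_apply, realM, dotProduct, Fin.sum_univ_four]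
    ring
  · refine (Complex.reCLM.hasFDerivAt.comp p h1).congr_fderiv ?_
    ext h
    simp [sL_apply, tL_apply, realM, dotProduct, Fin.sum_univ_four]
    ring
  · refine (Complex.imCLM.hasFDerivAt.comp p h0).congr_fderiv ?_
    ext h
    simp [sL_apply, tL_apply, realM, dotProduct, Fin.sum_univ_four]
    ring
  · refine (Complex.imCLM.hasFDerivAt.comp p h1).congr_fderiv ?_
    ext h
    simp [sL_apply, tL_apply, realM, dotProduct, Fin.sum_univ_four]
    ring

def cj (Z : Mat2) : Mat2 := (starRingEnd ℂ).mapMatrix Z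

lemma cj_real (X : Mat2R) : cj (X.map Complex.ofReal) = X.map Complex.ofReal := by
  ext i j; simp [cj]

lemma cj_mul (X Y : Mat2) : cj (X * Y) = cj X * cj Y := map_mul _ _ _
lemma cj_add (X Y : Mat2) : cj (X + Y) = cj X + cj Y := map_add _ _ _
lemma cj_det (X : Mat2) : (cj X).det = starRingEnd ℂ X.det := by
  unfold cj; exact (RingHom.map_det _ _).symm
lemma cj_inv (X : Mat2) (h : IsUnit X.det) : cj X⁻¹ = (cj X)⁻¹ := by
  symm
  apply Matrix.inv_eq_right_inv
  rw [← cj_mul, Matrix.mul_nonsing_inv _ h]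
  exact map_one _

lemma cj_Vm (M : Mat4) (Z : Mat2) : Vm M (cj Z) = cj (Vm M Z) := by
  unfold Vm
  rw [cj_add, cj_mul, cj_real, cj_real]

lemma cj_act (M : Mat4) (Z : Mat2) (h : IsUnit (Vm M Z).det) : act M (cj Z) = cj (act M Z) := by
  unfold act
  unfold Vm at h
  rw [cj_mul, cj_inv _ h]
  simp only [cj_add, cj_mul, cj_real]

lemma det_sub_cj (Z : Mat2) (h1 : Z 1 1 = Z 0 0) (h2 : Z 1 0 = Z 0 1) :
    (cj Z - Z).det = ((-4 * ((Z 0 0).im ^ 2 - (Z 0 1).im ^ 2) : ℝ) : ℂ) := by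
  rw [Matrix.det_fin_two]
  simp only [cj, Matrix.sub_apply, RingHom.mapMatrix_apply, Matrix.map_apply, h1, h2]
  apply Complex.ext <;> simp [pow_two] <;> ring

lemma im_identity (M : Mat4) (hM : M ∈ OmegaHat) (Z : Mat2) (hZ : Z ∈ Hhat) :
    (act M Z 0 0).im ^ 2 - (act M Z 0 1).im ^ 2 =
      Complex.normSq ((Vm M Z)⁻¹.det) * ((Z 0 0).im ^ 2 - (Z 0 1).im ^ 2) := by
  have hu := det_unit M hM Z hZ
  have hu' : IsUnit (Vm M (cj Z)).det := by
    rw [cj_Vm, cj_det]; exact hu.map _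
  have hW := hM.2 Z hZ
  have hs : (cj Z)ᵀ = cj Z := by
    ext i j; fin_cases i <;> fin_cases j <;> simp [cj, hZ.2.1]
  have hs2 : (cj (act M Z))ᵀ = cj (act M Z) := by
    ext i j; fin_cases i <;> fin_cases j <;> simp [cj, hW.2.1]
  have e := congrArg Matrix.det (diff_identity M hM.1 Z (cj Z) hs hu hu')
  rw [cj_act M Z hu, hs2, det_sub_cj _ hW.1 hW.2.1, Matrix.det_mul, Matrix.det_mul,
    det_sub_cj _ hZ.1 hZ.2.1, Matrix.det_transpose, cj_Vm, ← cj_inv _ hu, cj_det] at e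
  have e2 : ((-4 * ((act M Z 0 0).im ^ 2 - (act M Z 0 1).im ^ 2) : ℝ) : ℂ) =
      ((Complex.normSq ((Vm M Z)⁻¹.det) * (-4 * ((Z 0 0).im ^ 2 - (Z 0 1).im ^ 2)) : ℝ) : ℂ) := by
    rw [e, Complex.ofReal_mul (Complex.normSq _), Complex.normSq_eq_conj_mul_self]; ring
  have e3 := Complex.ofReal_injective e2
  linarith

/-- the Jacobian determinant of the coordinate map induced by
`M ∈ Ω̂₂` equals `(v₁+v₂)²(v₁−v₂)²/((y₁+y₂)²(y₁−y₂)²)`; consequently the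
symplectic volume element `4/((y₁+y₂)²(y₁−y₂)²) dx₁dx₂dy₁dy₂` is invariant. -/
theorem stmt_19 (M : Mat4) (hM : M ∈ OmegaHat) :
    ∀ p ∈ Hhat4, ∃ φ : (Fin 4 → ℝ) →L[ℝ] (Fin 4 → ℝ),
      HasFDerivAt (Fmap M) φ p ∧
      LinearMap.det (φ : (Fin 4 → ℝ) →ₗ[ℝ] (Fin 4 → ℝ)) =
        ((Fmap M p 2 + Fmap M p 3) ^ 2 * (Fmap M p 2 - Fmap M p 3) ^ 2) /
          ((p 2 + p 3) ^ 2 * (p 2 - p 3) ^ 2) ∧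
      (4 / ((Fmap M p 2 + Fmap M p 3) ^ 2 * (Fmap M p 2 - Fmap M p 3) ^ 2)) *
          |LinearMap.det (φ : (Fin 4 → ℝ) →ₗ[ℝ] (Fin 4 → ℝ))| =
        4 / ((p 2 + p 3) ^ 2 * (p 2 - p 3) ^ 2) := by
  intro p hp
  have hZ := ptZ_mem hp
  have hu := det_unit M hM _ hZ
  obtain ⟨K, hK⟩ : ∃ K, K = (Vm M (ptZ p))⁻¹ := ⟨_, rfl⟩
  have hd := deriv_entry M hM p hp K hK
  have h00 := hd 0 0
  have h01 := hd 0 1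
  have h11 : HasFDerivAt (fun x => act M (ptZ x) 0 0)
      ((K 0 1 * K 0 1 + K 1 1 * K 1 1) • sL + (K 1 1 * K 0 1 + K 0 1 * K 1 1) • tL) p := by
    refine (hd 1 1).congr_of_eventuallyEq ?_
    filter_upwards [Hhat4_open.mem_nhds hp] with x hx
    exact (hM.2 _ (ptZ_mem hx)).1.symm
  have heq := h00.unique h11
  have c1 := congrArg (fun L : (Fin 4 → ℝ) →L[ℝ] ℂ => L ![1, 0, 0, 0]) heq
  have c2 := congrArg (fun L : (Fin 4 → ℝ) →L[ℝ] ℂ => L ![0, 1, 0, 0]) heq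
  simp [sL_apply, tL_apply] at c1 c2
  have hdet : K.det ≠ 0 := by
    rw [hK]; exact (Matrix.isUnit_nonsing_inv_det _ hu).ne_zero
  have hdet' : K 0 0 * K 1 1 - K 0 1 * K 1 0 ≠ 0 := by rwa [Matrix.det_fin_two] at hdet
  have hk := alg_K _ _ _ _ c1 c2 hdet'
  have him := im_identity M hM _ hZ
  rw [← hK] at him
  have hF2 : (act M (ptZ p) 0 0).im = Fmap M p 2 := rfl
  have hF3 : (act M (ptZ p) 0 1).im = Fmap M p 3 := rfl
  have hp2 : (ptZ p 0 0).im = p 2 := by simp [ptZ]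
  have hp3 : (ptZ p 0 1).im = p 3 := by simp [ptZ]
  rw [hF2, hF3, hp2, hp3] at him
  have hpos : 0 < p 2 ^ 2 - p 3 ^ 2 := by
    have : |p 3| < p 2 := hp
    have := abs_lt.mp this
    nlinarith
  have hn : 0 < Complex.normSq K.det := Complex.normSq_pos.mpr hdet
  have r1 : (Fmap M p 2 + Fmap M p 3) ^ 2 * (Fmap M p 2 - Fmap M p 3) ^ 2
      = Complex.normSq K.det ^ 2 * (p 2 ^ 2 - p 3 ^ 2) ^ 2 := by
    rw [← mul_pow, ← mul_pow, ← him]; ring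
  have r2 : (p 2 + p 3) ^ 2 * (p 2 - p 3) ^ 2 = (p 2 ^ 2 - p 3 ^ 2) ^ 2 := by ring
  have hdetφ := det_realM (K 0 0 * K 0 0 + K 1 0 * K 1 0) (K 1 0 * K 0 0 + K 0 0 * K 1 0)
    (K 0 0 * K 0 1 + K 1 0 * K 1 1) (K 1 0 * K 0 1 + K 0 0 * K 1 1)
  have hfac : (K 0 0 * K 0 0 + K 1 0 * K 1 0) * (K 1 0 * K 0 1 + K 0 0 * K 1 1) -
      (K 1 0 * K 0 0 + K 0 0 * K 1 0) * (K 0 0 * K 0 1 + K 1 0 * K 1 1) =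
      (K 0 0 * K 0 0 - K 1 0 * K 1 0) * K.det := by
    rw [Matrix.det_fin_two]; ring
  have hns : Complex.normSq (K 0 0 * K 0 0 - K 1 0 * K 1 0) = Complex.normSq K.det := by
    rw [Matrix.det_fin_two]
    rcases sq_eq_sq_iff_eq_or_eq_neg.mp hk with q | q
    · rw [q]
    · rw [q, Complex.normSq_neg]
  rw [hfac, Complex.normSq_mul, hns] at hdetφ
  refine ⟨_, hasFDerivAt_Fmap M p _ _ _ _ h00 h01, ?_⟩
  rw [LinearMap.coe_toContinuousLinearMap, LinearMap.det_toLin', hdetφ, r1, r2]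
  refine ⟨by field_simp, ?_⟩
  rw [abs_of_pos (by positivity)]
  field_simp
end
end
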